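/- Independence for p-entailment: Let K be a consistent statistical ALC knowledge base and (C|D) a query. Then K ⊨_p (C|D)[m,M] if and only if {κ ∈ K : κ ⇌* (C|D)} ⊨_p (C|D)[m,M], where {κ ∈ K : κ ⇌* (C|D)} is the restriction of K to the conditionals connected to the query (C|D). -/

import Mathlib

open scoped Classical

/-- ALC concepts over concept names and role names (both drawn from ℕ,
regarded as disjoint name spaces). -/
inductive Cpt : Type where
  | top : Cpt
  | atom : ℕ → Cpt
  | neg : Cpt → Cpt
  | inter : Cpt → Cpt → Cpt
  | ex : ℕ → Cpt → Cpt
deriving DecidableEq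

/-- A finite interpretation with domain drawn from the type `α`. -/
structure Interp (α : Type) where
  dom : Finset α
  dom_nonempty : dom.Nonempty
  conc : ℕ → Finset α
  conc_sub : ∀ a, conc a ⊆ dom
  role : ℕ → Finset (α × α)
  role_sub : ∀ r, role r ⊆ dom ×ˢ dom

/-- The extension `C^I` of a concept. -/
noncomputable def Interp.ext {α : Type} (I : Interp α) : Cpt → Finset α
  | .top => I.dom
  | .atom a => I.conc a
  | .neg c => I.dom \ I.ext c
  | .inter c d => I.ext c ∩ I.ext d
  | .ex r c => I.dom.filter (fun d => ∃ e ∈ I.ext c, (d, e) ∈ I.role r)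

/-- `[C]^I`, the cardinality of the extension of `C`. -/
noncomputable def cardC {α : Type} (I : Interp α) (c : Cpt) : ℕ := (I.ext c).card

/-- A probabilistic conditional `(C|D)[l,u]`. -/
structure Cond : Type where
  C : Cpt
  D : Cpt
  l : ℚ
  u : ℚ
deriving DecidableEq

/-- `I ⊨ (C|D)[l,u]` iff `[D]^I = 0` or `l ≤ [C ⊓ D]^I/[D]^I ≤ u`. -/
def satCond {α : Type} (I : Interp α) (κ : Cond) : Prop :=
  cardC I κ.D = 0 ∨
    (κ.l ≤ (cardC I (.inter κ.C κ.D) : ℚ) / (cardC I κ.D : ℚ) ∧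
     (cardC I (.inter κ.C κ.D) : ℚ) / (cardC I κ.D : ℚ) ≤ κ.u)

/-- Finite interpretations (with domain drawn from the countable set ℕ). -/
abbrev FInterp := Interp ℕ

/-- The models of a knowledge base (finite set of conditionals). -/
def Models (K : Finset Cond) : Set FInterp := {I | ∀ κ ∈ K, satCond I κ}

/-- l-entailment: every model of `K` satisfies the conditional. -/
def entailsL (K : Finset Cond) (κ : Cond) : Prop := ∀ I ∈ Models K, satCond I κ

/-- The set of proportions `[C ⊓ D]^I/[D]^I` over models `I` of `K` with `[D]^I > 0`. -/
def ratioSet (K : Finset Cond) (C D : Cpt) : Set ℝ :=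
  {x | ∃ I ∈ Models K, 0 < cardC I D ∧
    x = (cardC I (.inter C D) : ℝ) / (cardC I D : ℝ)}

/-- p-entailment: some model satisfies `[D]^I > 0`, and `m`, `M` are the infimum and
supremum of the proportions `[C ⊓ D]^I/[D]^I` over models with `[D]^I > 0`. -/
def entailsP (K : Finset Cond) (C D : Cpt) (m M : ℝ) : Prop :=
  (∃ I ∈ Models K, 0 < cardC I D) ∧
    m = sInf (ratioSet K C D) ∧ M = sSup (ratioSet K C D)

/-- The signature of a concept: its concept names (`Sum.inl`) and role names (`Sum.inr`). -/
def sig : Cpt → Finset (ℕ ⊕ ℕ)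
  | .top => ∅
  | .atom a => {Sum.inl a}
  | .neg c => sig c
  | .inter c d => sig c ∪ sig d
  | .ex r c => insert (Sum.inr r) (sig c)

/-- Directly connected: the signatures of the two (qualitative) conditionals overlap. -/
def dconn (p q : Cpt × Cpt) : Prop :=
  ((sig p.1 ∪ sig p.2) ∩ (sig q.1 ∪ sig q.2)).Nonempty

/-- Connected (`⇌*`): transitive closure of `⇌` among the conditionals of the KB
together with the query. -/
def connIn (P : Set (Cpt × Cpt)) : Cpt × Cpt → Cpt × Cpt → Prop :=
  Relation.TransGen (fun p q => dconn p q ∧ p ∈ P ∧ q ∈ P)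

/-- Product of finite sets of naturals, coded by pairing. -/
noncomputable def prodF (A B : Finset ℕ) : Finset ℕ := (A ×ˢ B).map Nat.pairEquiv.toEmbedding

theorem mem_prodF {A B : Finset ℕ} {n : ℕ} :
    n ∈ prodF A B ↔ n.unpair.1 ∈ A ∧ n.unpair.2 ∈ B := by
  unfold prodF
  rw [Finset.mem_map_equiv, Finset.mem_product]
  rfl

theorem card_prodF (A B : Finset ℕ) : (prodF A B).card = A.card * B.card := by
  simp [prodF]

/-- Product interpretation: names in `S` are read in the first factor, others in the second. -/
noncomputable def prodI (S : Set (ℕ ⊕ ℕ)) (I J : FInterp) : FInterp where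
  dom := prodF I.dom J.dom
  dom_nonempty := by
    obtain ⟨a, ha⟩ := I.dom_nonempty
    obtain ⟨b, hb⟩ := J.dom_nonempty
    exact ⟨Nat.pair a b, by simp [mem_prodF, ha, hb]⟩
  conc a := if Sum.inl a ∈ S then prodF (I.conc a) J.dom else prodF I.dom (J.conc a)
  conc_sub a := by
    intro n
    have h1 := @I.conc_sub a n.unpair.1
    have h2 := @J.conc_sub a n.unpair.2
    split_ifs <;> simp only [mem_prodF] <;> tauto
  role r := (prodF I.dom J.dom ×ˢ prodF I.dom J.dom).filter fun p =>
    if Sum.inr r ∈ S then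
      (p.1.unpair.1, p.2.unpair.1) ∈ I.role r ∧ p.1.unpair.2 = p.2.unpair.2
    else (p.1.unpair.2, p.2.unpair.2) ∈ J.role r ∧ p.1.unpair.1 = p.2.unpair.1
  role_sub r := Finset.filter_subset _ _

theorem ext_sub (I : FInterp) (c : Cpt) : I.ext c ⊆ I.dom := by
  induction c with
  | top => exact fun x hx => hx
  | atom a => exact I.conc_sub a
  | neg c ih =>
    intro x hx
    simp only [Interp.ext, Finset.mem_sdiff] at hx
    exact hx.1
  | inter c d ihc ihd =>
    intro x hx
    simp only [Interp.ext, Finset.mem_inter] at hx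
    exact ihc hx.1
  | ex r c ih =>
    intro x hx
    simp only [Interp.ext, Finset.mem_filter] at hx
    exact hx.1

theorem ext_prodI_in (S : Set (ℕ ⊕ ℕ)) (I J : FInterp) (c : Cpt) (h : ∀ x ∈ sig c, x ∈ S) :
    (prodI S I J).ext c = prodF (I.ext c) J.dom := by
  induction c with
  | top => rfl
  | atom a =>
    have : Sum.inl a ∈ S := h _ (by simp [sig])
    simp [Interp.ext, prodI, this]
  | neg c ih =>
    ext n
    simp only [Interp.ext, ih h, Finset.mem_sdiff, mem_prodF]
    simp only [prodI, mem_prodF]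
    tauto
  | inter c d ihc ihd =>
    ext n
    simp only [Interp.ext, ihc (fun x hx => h x (by simp [sig, hx])),
      ihd (fun x hx => h x (by simp [sig, hx])), Finset.mem_inter, mem_prodF]
    tauto
  | ex r c ih =>
    have hr : Sum.inr r ∈ S := h _ (by simp [sig])
    have ih := ih (fun x hx => h x (by simp [sig, hx]))
    ext n
    simp only [Interp.ext, ih, Finset.mem_filter, mem_prodF]
    simp only [prodI, mem_prodF, Finset.mem_filter, Finset.mem_product, hr, if_true]
    constructor
    · rintro ⟨⟨h1, h2⟩, e, ⟨he1, he2⟩, -, h3, h4⟩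
      exact ⟨⟨h1, _, he1, h3⟩, h2⟩
    · rintro ⟨⟨h1, e, he, h3⟩, h2⟩
      refine ⟨⟨h1, h2⟩, Nat.pair e n.unpair.2, ?_⟩
      simp [he, h2, h1, h3, ext_sub I c he]

theorem ext_prodI_out (S : Set (ℕ ⊕ ℕ)) (I J : FInterp) (c : Cpt) (h : ∀ x ∈ sig c, x ∉ S) :
    (prodI S I J).ext c = prodF I.dom (J.ext c) := by
  induction c with
  | top => rfl
  | atom a =>
    have : Sum.inl a ∉ S := h _ (by simp [sig])
    simp [Interp.ext, prodI, this]
  | neg c ih =>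
    ext n
    simp only [Interp.ext, ih h, Finset.mem_sdiff, mem_prodF]
    simp only [prodI, mem_prodF]
    tauto
  | inter c d ihc ihd =>
    ext n
    simp only [Interp.ext, ihc (fun x hx => h x (by simp [sig, hx])),
      ihd (fun x hx => h x (by simp [sig, hx])), Finset.mem_inter, mem_prodF]
    tauto
  | ex r c ih =>
    have hr : Sum.inr r ∉ S := h _ (by simp [sig])
    have ih := ih (fun x hx => h x (by simp [sig, hx]))
    ext n
    simp only [Interp.ext, ih, Finset.mem_filter, mem_prodF]
    simp only [prodI, mem_prodF, Finset.mem_filter, Finset.mem_product, hr, if_false]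
    constructor
    · rintro ⟨⟨h1, h2⟩, e, ⟨he1, he2⟩, -, h3, h4⟩
      exact ⟨h1, h2, _, he2, h3⟩
    · rintro ⟨h1, h2, e, he, h3⟩
      refine ⟨⟨h1, h2⟩, Nat.pair n.unpair.1 e, ?_⟩
      simp [he, h2, h1, h3, ext_sub J c he]

theorem satCond_scale (I J : FInterp) (κ : Cond) (k : ℕ) (hk : 0 < k)
    (h1 : cardC J κ.D = cardC I κ.D * k)
    (h2 : cardC J (.inter κ.C κ.D) = cardC I (.inter κ.C κ.D) * k)
    (h : satCond I κ) : satCond J κ := by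
  unfold satCond at *
  have hk' : (k : ℚ) ≠ 0 := by positivity
  rw [h1, h2]
  push_cast
  rw [mul_div_mul_right _ _ hk']
  rcases h with h | h
  · left; simp [h]
  · right; exact h

theorem key (K K' : Finset Cond) (J : FInterp) (hJ : J ∈ Models K)
    (C D : Cpt) (S : Set (ℕ ⊕ ℕ))
    (hq : ∀ x ∈ sig C ∪ sig D, x ∈ S)
    (hin : ∀ κ ∈ K', ∀ x ∈ sig κ.C ∪ sig κ.D, x ∈ S)
    (hout : ∀ κ ∈ K, κ ∉ K' → ∀ x ∈ sig κ.C ∪ sig κ.D, x ∉ S)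
    (I : FInterp) (hI : I ∈ Models K') :
    ∃ L ∈ Models K, ∃ k : ℕ, 0 < k ∧ cardC L D = cardC I D * k ∧
      cardC L (.inter C D) = cardC I (.inter C D) * k := by
  have cin : ∀ c, (∀ x ∈ sig c, x ∈ S) →
      cardC (prodI S I J) c = cardC I c * J.dom.card := by
    intro c hc
    rw [cardC, ext_prodI_in S I J c hc, card_prodF, cardC]
  have cout : ∀ c, (∀ x ∈ sig c, x ∉ S) →
      cardC (prodI S I J) c = cardC J c * I.dom.card := by
    intro c hc
    rw [cardC, ext_prodI_out S I J c hc, card_prodF, cardC, mul_comm]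
  refine ⟨prodI S I J, ?_, J.dom.card, J.dom_nonempty.card_pos, ?_, ?_⟩
  · intro κ hκ
    by_cases h : κ ∈ K'
    · exact satCond_scale I _ κ _ J.dom_nonempty.card_pos
        (cin _ fun x hx => hin κ h x (by simp [hx])) (cin _ fun x hx => hin κ h x hx) (hI κ h)
    · exact satCond_scale J _ κ _ I.dom_nonempty.card_pos
        (cout _ fun x hx => hout κ hκ h x (by simp [hx])) (cout _ fun x hx => hout κ hκ h x hx)
        (hJ κ hκ)
  · exact cin _ fun x hx => hq x (by simp [hx])
  · exact cin _ fun x hx => hq x hx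

theorem key2 (K K' : Finset Cond) (hsub : K' ⊆ K) (C D : Cpt) (m M : ℝ)
    (h : ∀ I ∈ Models K', ∃ L ∈ Models K, ∃ k : ℕ, 0 < k ∧ cardC L D = cardC I D * k ∧
      cardC L (.inter C D) = cardC I (.inter C D) * k) :
    entailsP K C D m M ↔ entailsP K' C D m M := by
  have hmod : ∀ I ∈ Models K, I ∈ Models K' := fun I hI κ hκ => hI κ (hsub hκ)
  have e1 : (∃ I ∈ Models K, 0 < cardC I D) ↔ ∃ I ∈ Models K', 0 < cardC I D := by
    constructor
    · rintro ⟨I, hI, h0⟩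
      exact ⟨I, hmod I hI, h0⟩
    · rintro ⟨I, hI, h0⟩
      obtain ⟨L, hL, k, hk, h1, h2⟩ := h I hI
      exact ⟨L, hL, by rw [h1]; positivity⟩
  have e2 : ratioSet K C D = ratioSet K' C D := by
    ext x
    constructor
    · rintro ⟨I, hI, h0⟩
      exact ⟨I, hmod I hI, h0⟩
    · rintro ⟨I, hI, h0, rfl⟩
      obtain ⟨L, hL, k, hk, h1, h2⟩ := h I hI
      refine ⟨L, hL, by rw [h1]; positivity, ?_⟩
      have hk' : (k : ℝ) ≠ 0 := by positivity
      rw [h1, h2]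
      push_cast
      rw [mul_div_mul_right _ _ hk']
  unfold entailsP
  rw [e1, e2]

/-- Independence for p-entailment. -/
theorem independence_p (K : Finset Cond) (hK : (Models K).Nonempty)
    (C D : Cpt) (m M : ℝ) :
    entailsP K C D m M ↔
      entailsP
        (K.filter fun κ =>
          connIn ((↑(K.image fun κ' => (κ'.C, κ'.D)) : Set (Cpt × Cpt)) ∪ {(C, D)})
            (κ.C, κ.D) (C, D))
        C D m M := by
  obtain ⟨J, hJ⟩ := hK
  refine key2 K _ (Finset.filter_subset _ _) C D m M fun I hI => ?_
  set P := ((↑(K.image fun κ' => (κ'.C, κ'.D)) : Set (Cpt × Cpt)) ∪ {(C, D)}) with hP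
  have hKP : ∀ κ ∈ K, (κ.C, κ.D) ∈ P := fun κ hκ =>
    Or.inl (Finset.mem_coe.2 (Finset.mem_image_of_mem _ hκ))
  have hQP : (C, D) ∈ P := Or.inr rfl
  refine key K _ J hJ C D
    {x | x ∈ sig C ∪ sig D ∨
      ∃ κ ∈ K, connIn P (κ.C, κ.D) (C, D) ∧ x ∈ sig κ.C ∪ sig κ.D}
    (fun x hx => Or.inl hx) ?_ ?_ I hI
  · intro κ hκ x hx
    rw [Finset.mem_filter] at hκ
    exact Or.inr ⟨κ, hκ.1, hκ.2, hx⟩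
  · rintro κ hκ hn x hx (hS | ⟨κ', hκ', hc, hS⟩)
    · exact hn (Finset.mem_filter.2 ⟨hκ, Relation.TransGen.single
        ⟨⟨x, Finset.mem_inter.2 ⟨hx, hS⟩⟩, hKP κ hκ, hQP⟩⟩)
    · exact hn (Finset.mem_filter.2 ⟨hκ, Relation.TransGen.head
        ⟨⟨x, Finset.mem_inter.2 ⟨hx, hS⟩⟩, hKP κ hκ, hKP κ' hκ'⟩ hc⟩)
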